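/- (Quadrature error estimate, eqs. (24)–(25) of the paper.) Let k ≥ 1 and let c₁, …, c_k ∈ [0,1] and b₁, …, b_k ∈ ℝ be nodes and weights of a quadrature formula that is exact for all polynomials of degree ≤ 2k−1, i.e., Σ_{ℓ=1}^k b_ℓ q(c_ℓ) = ∫₀¹ q(x) dx for all q ∈ Π_{2k−1}. Let 0 ≤ j ≤ 2k−1, let E be a real normed vector space, and let ψ : ℝ → E be C^∞. Then Σ_{ℓ=1}^k b_ℓ P_j(c_ℓ) ψ(c_ℓ h) − ∫₀¹ P_j(τ) ψ(τh) dτ is O(h^{2k−j}) as h → 0⁺. Moreover, if ψ is a polynomial map with deg(P_j · ψ) ≤ 2k−1, this difference is exactly 0 for every h. -/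

import Mathlib

open MeasureTheory Polynomial

/-- The shifted Legendre polynomial `P j`, orthonormal on `[0,1]`. -/
noncomputable def legP (j : ℕ) : ℝ → ℝ := fun x =>
  (Real.sqrt (2 * j + 1) / (Nat.factorial j)) *
    (Polynomial.derivative^[j] ((Polynomial.X ^ 2 - Polynomial.X) ^ j)).eval x

noncomputable def legPoly (j : ℕ) : Polynomial ℝ :=
  Polynomial.C (Real.sqrt (2 * j + 1) / (Nat.factorial j)) *
    (Polynomial.derivative^[j] ((Polynomial.X ^ 2 - Polynomial.X) ^ j))

theorem legP_eq (j : ℕ) (x : ℝ) : legP j x = (legPoly j).eval x := by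
  simp only [legP, legPoly, Polynomial.eval_mul, Polynomial.eval_C]

theorem legPoly_deg (j : ℕ) : (legPoly j).natDegree ≤ j := by
  unfold legPoly
  refine (Polynomial.natDegree_C_mul_le _ _).trans ?_
  refine (Polynomial.natDegree_iterate_derivative _ _).trans ?_
  have h1 : ((Polynomial.X ^ 2 - Polynomial.X : Polynomial ℝ)).natDegree ≤ 2 := by
    compute_degree
  have h2 : ((Polynomial.X ^ 2 - Polynomial.X : Polynomial ℝ) ^ j).natDegree ≤ j * 2 :=
    Polynomial.natDegree_pow_le_of_le j h1
  omega

theorem legP_cont (j : ℕ) : Continuous (legP j) := by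
  have : legP j = fun x => (legPoly j).eval x := funext (legP_eq j)
  rw [this]
  exact (legPoly j).continuous

theorem exact_poly (k : ℕ) (hk : 1 ≤ k) (c b : Fin k → ℝ)
    (hquad : ∀ q : Polynomial ℝ, q.natDegree ≤ 2 * k - 1 →
      ∑ ℓ, b ℓ * q.eval (c ℓ) = ∫ x in (0:ℝ)..1, q.eval x)
    (j : ℕ) {E : Type*} [NormedAddCommGroup E] [NormedSpace ℝ E] [CompleteSpace E]
    (n : ℕ) (a : ℕ → E) (hn : j + n ≤ 2 * k - 1) (h : ℝ) :
    (∑ ℓ, (b ℓ * legP j (c ℓ)) • (∑ i ∈ Finset.range (n + 1), (c ℓ * h) ^ i • a i)) =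
        ∫ τ in (0:ℝ)..1, legP j τ • (∑ i ∈ Finset.range (n + 1), (τ * h) ^ i • a i) := by
  have hl := legP_cont j
  simp only [Finset.smul_sum]
  rw [intervalIntegral.integral_finsetSum, Finset.sum_comm]
  · refine Finset.sum_congr rfl fun i hi => ?_
    have hi' : i ≤ n := Nat.lt_succ_iff.mp (Finset.mem_range.mp hi)
    simp only [smul_smul]
    rw [intervalIntegral.integral_smul_const, ← Finset.sum_smul]
    congr 1
    have hd : (legPoly j * (Polynomial.C h * Polynomial.X) ^ i).natDegree ≤ 2 * k - 1 := by
      refine Polynomial.natDegree_mul_le.trans ?_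
      have h1 := legPoly_deg j
      have h2 : ((Polynomial.C h * Polynomial.X) ^ i).natDegree ≤ i * 1 :=
        Polynomial.natDegree_pow_le_of_le i (by compute_degree)
      omega
    have := hquad _ hd
    simp only [Polynomial.eval_mul, Polynomial.eval_pow, Polynomial.eval_C, Polynomial.eval_X,
      ← legP_eq, mul_comm h] at this
    rw [← this]
    exact Finset.sum_congr rfl fun _ _ => by ring
  · intro i _
    exact Continuous.intervalIntegrable (by fun_prop) _ _

/-- quadrature error estimate, eqs. (24)–(25).  For a quadrature on `[0,1]`
exact on `Π_{2k-1}`, `0 ≤ j ≤ 2k-1` and `ψ : ℝ → E` of class `C^∞`,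
`∑_ℓ b_ℓ P_j(c_ℓ) ψ(c_ℓ h) - ∫₀¹ P_j(τ) ψ(τh) dτ` is `O(h^{2k-j})` as `h → 0⁺`; moreover it
vanishes identically when `ψ` is a polynomial map with `deg (P_j ψ) ≤ 2k-1`. -/
theorem stmt9 (k : ℕ) (hk : 1 ≤ k)
    (c b : Fin k → ℝ) (hc : ∀ ℓ, c ℓ ∈ Set.Icc (0:ℝ) 1)
    (hquad : ∀ q : Polynomial ℝ, q.natDegree ≤ 2 * k - 1 →
      ∑ ℓ, b ℓ * q.eval (c ℓ) = ∫ x in (0:ℝ)..1, q.eval x)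
    (j : ℕ) (hj : j ≤ 2 * k - 1)
    {E : Type*} [NormedAddCommGroup E] [NormedSpace ℝ E] [CompleteSpace E]
    (ψ : ℝ → E) (hψ : ContDiff ℝ (⊤ : ℕ∞) ψ) :
    (∃ C > (0:ℝ), ∃ h₀ > (0:ℝ), ∀ h : ℝ, 0 < h → h ≤ h₀ →
      ‖(∑ ℓ, (b ℓ * legP j (c ℓ)) • ψ (c ℓ * h)) -
          ∫ τ in (0:ℝ)..1, legP j τ • ψ (τ * h)‖ ≤ C * h ^ (2 * k - j)) ∧
    (∀ (n : ℕ) (a : Fin (n + 1) → E),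
      (∀ t : ℝ, ψ t = ∑ i : Fin (n + 1), t ^ (i : ℕ) • a i) →
      j + n ≤ 2 * k - 1 →
      ∀ h : ℝ, (∑ ℓ, (b ℓ * legP j (c ℓ)) • ψ (c ℓ * h)) =
        ∫ τ in (0:ℝ)..1, legP j τ • ψ (τ * h)) := by
  have hl := legP_cont j
  have hψc : Continuous ψ := hψ.continuous
  constructor
  · obtain ⟨n, hn⟩ : ∃ n, 2 * k - j = n + 1 := ⟨2 * k - j - 1, by omega⟩
    obtain ⟨C₀, hC₀⟩ := exists_taylor_mean_remainder_bound (f := ψ) (a := 0) (b := 1) (n := n)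
      zero_le_one ((hψ.of_le (by exact_mod_cast le_top)).contDiffOn)
    obtain ⟨M, hM⟩ := (isCompact_Icc (a := (0:ℝ)) (b := 1)).exists_bound_of_continuousOn
      hl.continuousOn
    have hM0 : 0 ≤ M := (norm_nonneg _).trans (hM 0 (by simp))
    set T : ℝ → E := fun t => ∑ i ∈ Finset.range (n + 1),
      t ^ i • (((i.factorial : ℝ)⁻¹) • iteratedDerivWithin i ψ (Set.Icc 0 1) 0) with hT
    have hTc : Continuous T := by fun_prop
    have hr : ∀ h : ℝ, 0 < h → h ≤ 1 → ∀ τ ∈ Set.Icc (0:ℝ) 1,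
        ‖ψ (τ * h) - T (τ * h)‖ ≤ |C₀| * h ^ (n + 1) := by
      intro h h0 h1 τ hτ
      have hm : τ * h ∈ Set.Icc (0:ℝ) 1 :=
        ⟨mul_nonneg hτ.1 h0.le, mul_le_one₀ hτ.2 h0.le h1⟩
      have := hC₀ _ hm
      rw [taylor_within_apply] at this
      have e : T (τ * h) = ∑ i ∈ Finset.range (n + 1), (((i.factorial : ℝ)⁻¹) * (τ * h - 0) ^ i) •
          iteratedDerivWithin i ψ (Set.Icc 0 1) 0 := by
        rw [hT]
        refine Finset.sum_congr rfl fun i _ => ?_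
        rw [smul_smul, sub_zero, mul_comm]
      rw [e]
      refine this.trans ?_
      rw [sub_zero]
      refine mul_le_mul (le_abs_self _) ?_ (pow_nonneg hm.1 _) (abs_nonneg _)
      exact pow_le_pow_left₀ hm.1 (mul_le_of_le_one_left h0.le hτ.2) _
    set B : ℝ := ∑ ℓ, |b ℓ| with hB
    have hB0 : 0 ≤ B := Finset.sum_nonneg fun _ _ => abs_nonneg _
    refine ⟨(B + 1) * M * |C₀| + 1, by positivity, 1, one_pos, fun h h0 h1 => ?_⟩
    have hex := exact_poly k hk c b hquad j n
      (fun i => ((i.factorial : ℝ)⁻¹) • iteratedDerivWithin i ψ (Set.Icc 0 1) 0) (by omega) h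
    have key : (∑ ℓ, (b ℓ * legP j (c ℓ)) • ψ (c ℓ * h)) -
          ∫ τ in (0:ℝ)..1, legP j τ • ψ (τ * h) =
        (∑ ℓ, (b ℓ * legP j (c ℓ)) • (ψ (c ℓ * h) - T (c ℓ * h))) -
          ∫ τ in (0:ℝ)..1, legP j τ • (ψ (τ * h) - T (τ * h)) := by
      simp only [smul_sub, Finset.sum_sub_distrib]
      rw [intervalIntegral.integral_sub
        (Continuous.intervalIntegrable (by fun_prop) _ _)
        (Continuous.intervalIntegrable (by fun_prop) _ _)]
      change (∑ ℓ, (b ℓ * legP j (c ℓ)) • T (c ℓ * h)) =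
        ∫ τ in (0:ℝ)..1, legP j τ • T (τ * h) at hex
      rw [hex]
      abel
    rw [key, hn]
    have hp : ∀ τ ∈ Set.Icc (0:ℝ) 1, ‖legP j τ • (ψ (τ * h) - T (τ * h))‖ ≤
        M * (|C₀| * h ^ (n + 1)) := by
      intro τ hτ
      rw [norm_smul]
      exact mul_le_mul (hM τ hτ) (hr h h0 h1 τ hτ) (norm_nonneg _) hM0
    have hI : ‖∫ τ in (0:ℝ)..1, legP j τ • (ψ (τ * h) - T (τ * h))‖ ≤
        M * (|C₀| * h ^ (n + 1)) := by
      have := intervalIntegral.norm_integral_le_of_norm_le_const (a := (0:ℝ)) (b := 1)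
        (f := fun τ => legP j τ • (ψ (τ * h) - T (τ * h))) (C := M * (|C₀| * h ^ (n + 1)))
        (fun τ hτ => hp τ (by
          rw [Set.uIoc_of_le zero_le_one] at hτ
          exact ⟨hτ.1.le, hτ.2⟩))
      simpa using this
    have hS : ‖∑ ℓ, (b ℓ * legP j (c ℓ)) • (ψ (c ℓ * h) - T (c ℓ * h))‖ ≤
        B * (M * (|C₀| * h ^ (n + 1))) := by
      rw [hB, Finset.sum_mul]
      refine norm_sum_le_of_le _ fun ℓ _ => ?_
      rw [mul_smul, norm_smul, Real.norm_eq_abs]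
      exact mul_le_mul_of_nonneg_left (hp _ (hc ℓ)) (abs_nonneg _)
    have hpos : 0 < h ^ (n + 1) := pow_pos h0 _
    refine (norm_sub_le _ _).trans ?_
    nlinarith [hI, hS]
  · intro n a ha hn h
    have hex := exact_poly k hk c b hquad j n
      (fun i => if hi : i < n + 1 then a ⟨i, hi⟩ else 0) hn h
    have e : ∀ t : ℝ, ψ t = ∑ i ∈ Finset.range (n + 1),
        t ^ i • (if hi : i < n + 1 then a ⟨i, hi⟩ else 0) := by
      intro t
      rw [ha t, Finset.sum_range]
      exact Finset.sum_congr rfl fun i _ => by rw [dif_pos i.isLt]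
    simp only [e]
    exact hex
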